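/- arXiv:2503.05903 — 3 statements merged into one kernel-verified Lean document; each statement's English description precedes it below -/
import Mathlib

section
/- For any γ>0 and all a,b∈ℝ one has C₁(|a|+|b|)^{γ−1}|b−a| ≤ |𝐛^γ − 𝐚^γ| ≤ C₂(|a|+|b|)^{γ−1}|b−a|, where C₁ = γ if γ∈(0,1] and C₁ = 2^{1−γ} if γ∈[1,∞), and C₂ = 2^{1−γ} if γ∈(0,1] and C₂ = γ if γ∈[1,∞). -/
open MeasureTheory Metric Set
open scoped ENNReal

noncomputable section

/-- Double Gagliardo integral `∬_{D×D} |u(x)-u(y)|^p / |x-y|^{n+sp} dx dy` in `ℝ≥0∞`. -/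
def gagliardoE (n : ℕ) (s p : ℝ) (D : Set (EuclideanSpace ℝ (Fin n)))
    (u : EuclideanSpace ℝ (Fin n) → ℝ) : ℝ≥0∞ :=
  ∫⁻ x in D, ∫⁻ y in D, ENNReal.ofReal (|u x - u y| ^ p / dist x y ^ ((n : ℝ) + s * p))

/-- Nonlocal tail `Tail(u; B_R(x₀))` in `ℝ≥0∞`. -/
def tailE (n : ℕ) (s p : ℝ) (u : EuclideanSpace ℝ (Fin n) → ℝ)
    (x₀ : EuclideanSpace ℝ (Fin n)) (R : ℝ) : ℝ≥0∞ :=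
  (ENNReal.ofReal (R ^ (s * p)) *
      ∫⁻ x in (ball x₀ R)ᶜ,
        ENNReal.ofReal (|u x| ^ (p - 1) / dist x x₀ ^ ((n : ℝ) + s * p))) ^ (1 / (p - 1))

/-- `f ∈ L^q_loc(D)`. -/
def MemLploc (n : ℕ) (q : ℝ) (D : Set (EuclideanSpace ℝ (Fin n)))
    (f : EuclideanSpace ℝ (Fin n) → ℝ) : Prop :=
  Measurable f ∧
    ∀ K : Set (EuclideanSpace ℝ (Fin n)), K ⊆ D → IsCompact K →
      (∫⁻ x in K, ENNReal.ofReal (|f x| ^ q)) < ⊤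

/-- `u` is a local weak solution of `(-Δ_p)^s u = f` in `D`. -/
def IsLocalWeakSolution (n : ℕ) (p s : ℝ) (D : Set (EuclideanSpace ℝ (Fin n)))
    (f u : EuclideanSpace ℝ (Fin n) → ℝ) : Prop :=
  Measurable u ∧
  (∀ K : Set (EuclideanSpace ℝ (Fin n)), K ⊆ D → IsCompact K →
      (∫⁻ x in K, ENNReal.ofReal (|u x| ^ p)) < ⊤ ∧ gagliardoE n s p K u < ⊤) ∧
  (∫⁻ x, ENNReal.ofReal (|u x| ^ (p - 1) / (1 + ‖x‖) ^ ((n : ℝ) + s * p))) < ⊤ ∧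
  ∀ φ : EuclideanSpace ℝ (Fin n) → ℝ, Measurable φ →
    (∃ K : Set (EuclideanSpace ℝ (Fin n)), IsCompact K ∧ K ⊆ D ∧
      ∀ᵐ x, x ∉ K → φ x = 0) →
    (∫⁻ x, ENNReal.ofReal (|φ x| ^ p)) < ⊤ →
    gagliardoE n s p Set.univ φ < ⊤ →
    (∫ x, ∫ y,
        |u x - u y| ^ (p - 2) * (u x - u y) * (φ x - φ y) / dist x y ^ ((n : ℝ) + s * p)) =
      ∫ x in D, f x * φ x

/-- The signed `γ`-power `𝐚^γ = |a|^{γ-1} a`. -/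
def sgnPow (γ a : ℝ) : ℝ := |a| ^ (γ - 1) * a

/-!
Split according to the sign of `a * b`: with `x = min |a| |b|` and `y = max |a| |b|`, the quantity
to be estimated is `y ^ γ - x ^ γ` against `y - x` when `a` and `b` have the same sign, and
`x ^ γ + y ^ γ` against `x + y` when they have opposite signs. Differences are controlled by the
tangent of `t ↦ t ^ γ` at `y` on one side and by the monotonicity of `t ↦ t ^ (γ - 1)` on the
other, combined with `(x + y) / 2 ≤ y ≤ x + y`. Sums are controlled by convexity (concavity if
`γ ≤ 1`) at the midpoint `(x + y) / 2` on one side and by super- (sub-)additivity of `t ↦ t ^ γ`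
on the other.
-/

section Tangent

variable {S : Set ℝ} {f : ℝ → ℝ} {f' x y : ℝ}

theorem sub_le_mul_sub_of_convexOn_of_hasDerivAt (hf : ConvexOn ℝ S f) (hx : x ∈ S) (hy : y ∈ S)
    (hf' : HasDerivAt f f' y) : f y - f x ≤ f' * (y - x) := by
  rcases lt_trichotomy x y with hxy | rfl | hyx
  · have hslope := hf.slope_le_of_hasDerivAt hx hy hxy hf'
    rwa [slope_def_field, div_le_iff₀ (sub_pos.2 hxy)] at hslope
  · simp
  · have hslope := hf.le_slope_of_hasDerivAt hy hx hyx hf'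
    rw [slope_def_field, le_div_iff₀ (sub_pos.2 hyx)] at hslope
    linarith

theorem mul_sub_le_sub_of_concaveOn_of_hasDerivAt (hf : ConcaveOn ℝ S f) (hx : x ∈ S) (hy : y ∈ S)
    (hf' : HasDerivAt f f' y) : f' * (y - x) ≤ f y - f x := by
  have hneg := sub_le_mul_sub_of_convexOn_of_hasDerivAt hf.neg hx hy hf'.neg
  simp only [Pi.neg_apply] at hneg
  linarith

end Tangent

section Rpow

variable {p x y s : ℝ}

theorem rpow_sub_one_mul_self (hp : p ≠ 0) (hx : 0 ≤ x) : x ^ (p - 1) * x = x ^ p := by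
  rw [← Real.rpow_add_one' hx (by simpa using hp), sub_add_cancel]

theorem two_rpow_one_sub_mul_rpow_sub_one (hs : 0 ≤ s) :
    (2 : ℝ) ^ (1 - p) * s ^ (p - 1) = (s / 2) ^ (p - 1) := by
  rw [Real.div_rpow hs zero_le_two, ← neg_sub p 1, Real.rpow_neg zero_le_two, inv_mul_eq_div]

theorem rpow_sub_rpow_le_mul_sub (hp : 1 ≤ p) (hx : 0 ≤ x) (hy : 0 ≤ y) :
    y ^ p - x ^ p ≤ p * y ^ (p - 1) * (y - x) :=
  sub_le_mul_sub_of_convexOn_of_hasDerivAt (convexOn_rpow hp) hx hy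
    (Real.hasDerivAt_rpow_const (.inr hp))

theorem mul_sub_le_rpow_sub_rpow (hp₀ : 0 ≤ p) (hp₁ : p ≤ 1) (hx : 0 ≤ x) (hy : 0 < y) :
    p * y ^ (p - 1) * (y - x) ≤ y ^ p - x ^ p :=
  mul_sub_le_sub_of_concaveOn_of_hasDerivAt (Real.concaveOn_rpow hp₀ hp₁) hx hy.le
    (Real.hasDerivAt_rpow_const (.inl hy.ne'))

theorem rpow_sub_one_mul_sub_le (hp : 1 ≤ p) (hx : 0 ≤ x) (hxy : x ≤ y) :
    y ^ (p - 1) * (y - x) ≤ y ^ p - x ^ p := by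
  have hp₀ : p ≠ 0 := by positivity
  have hmono : x ^ (p - 1) * x ≤ y ^ (p - 1) * x := by
    have := sub_nonneg.2 hp
    gcongr
  rw [rpow_sub_one_mul_self hp₀ hx] at hmono
  rw [mul_sub, rpow_sub_one_mul_self hp₀ (hx.trans hxy)]
  gcongr

theorem rpow_sub_rpow_le_rpow_sub_one_mul (hp₀ : 0 < p) (hp₁ : p ≤ 1) (hx : 0 ≤ x)
    (hxy : x ≤ y) : y ^ p - x ^ p ≤ y ^ (p - 1) * (y - x) := by
  rw [mul_sub, rpow_sub_one_mul_self hp₀.ne' (hx.trans hxy)]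
  rcases hx.eq_or_lt with rfl | hx_pos
  · simp [hp₀.ne']
  have hanti : y ^ (p - 1) * x ≤ x ^ (p - 1) * x := by
    gcongr ?_ * x
    exact Real.rpow_le_rpow_of_nonpos hx_pos hxy (sub_nonpos.2 hp₁)
  rw [rpow_sub_one_mul_self hp₀.ne' hx] at hanti
  gcongr

theorem two_mul_rpow_half_add_le (hp : 1 ≤ p) (hx : 0 ≤ x) (hy : 0 ≤ y) :
    2 * ((x + y) / 2) ^ p ≤ x ^ p + y ^ p := by
  have hmid := (convexOn_rpow hp).2 hx hy one_half_pos.le one_half_pos.le (add_halves 1)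
  simp only [smul_eq_mul, one_div_mul_eq_div, ← add_div] at hmid
  linarith

theorem rpow_add_rpow_le_two_mul_rpow_half_add (hp₀ : 0 ≤ p) (hp₁ : p ≤ 1) (hx : 0 ≤ x)
    (hy : 0 ≤ y) : x ^ p + y ^ p ≤ 2 * ((x + y) / 2) ^ p := by
  have hmid :=
    (Real.concaveOn_rpow hp₀ hp₁).2 hx hy one_half_pos.le one_half_pos.le (add_halves 1)
  simp only [smul_eq_mul, one_div_mul_eq_div, ← add_div] at hmid
  linarith

theorem two_rpow_one_sub_mul_rpow_sub_one_mul_self (hp : p ≠ 0) (hs : 0 ≤ s) :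
    (2 : ℝ) ^ (1 - p) * s ^ (p - 1) * s = 2 * (s / 2) ^ p := by
  rw [two_rpow_one_sub_mul_rpow_sub_one hs, ← rpow_sub_one_mul_self hp (div_nonneg hs zero_le_two)]
  ring

end Rpow

section PowerBounds

variable {γ x y : ℝ}

theorem rpow_sub_bounds_of_le_one (hγ₀ : 0 < γ) (hγ₁ : γ ≤ 1) (hx : 0 ≤ x) (hxy : x ≤ y) :
    γ * (x + y) ^ (γ - 1) * (y - x) ≤ y ^ γ - x ^ γ ∧
      y ^ γ - x ^ γ ≤ 2 ^ (1 - γ) * (x + y) ^ (γ - 1) * (y - x) := by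
  rcases hxy.eq_or_lt with rfl | hlt
  · simp
  have hy : 0 < y := hx.trans_lt hlt
  have hγ : γ - 1 ≤ 0 := sub_nonpos.2 hγ₁
  have : 0 ≤ y - x := sub_nonneg.2 hxy
  constructor
  · calc
      γ * (x + y) ^ (γ - 1) * (y - x) ≤ γ * y ^ (γ - 1) * (y - x) := by
        gcongr γ * ?_ * (y - x)
        exact Real.rpow_le_rpow_of_nonpos hy (by linarith) hγ
      _ ≤ y ^ γ - x ^ γ := mul_sub_le_rpow_sub_rpow hγ₀.le hγ₁ hx hy
  · calc
      y ^ γ - x ^ γ ≤ y ^ (γ - 1) * (y - x) := rpow_sub_rpow_le_rpow_sub_one_mul hγ₀ hγ₁ hx hxy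
      _ ≤ ((x + y) / 2) ^ (γ - 1) * (y - x) := by
        gcongr ?_ * (y - x)
        exact Real.rpow_le_rpow_of_nonpos (by linarith) (by linarith) hγ
      _ = 2 ^ (1 - γ) * (x + y) ^ (γ - 1) * (y - x) := by
        rw [two_rpow_one_sub_mul_rpow_sub_one (by linarith)]

theorem rpow_sub_bounds_of_one_le (hγ : 1 ≤ γ) (hx : 0 ≤ x) (hxy : x ≤ y) :
    2 ^ (1 - γ) * (x + y) ^ (γ - 1) * (y - x) ≤ y ^ γ - x ^ γ ∧
      y ^ γ - x ^ γ ≤ γ * (x + y) ^ (γ - 1) * (y - x) := by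
  have hy : 0 ≤ y := hx.trans hxy
  have : 0 ≤ γ - 1 := sub_nonneg.2 hγ
  have : 0 ≤ y - x := sub_nonneg.2 hxy
  constructor
  · calc
      2 ^ (1 - γ) * (x + y) ^ (γ - 1) * (y - x) = ((x + y) / 2) ^ (γ - 1) * (y - x) := by
        rw [two_rpow_one_sub_mul_rpow_sub_one (by positivity)]
      _ ≤ y ^ (γ - 1) * (y - x) := by
        gcongr
        linarith
      _ ≤ y ^ γ - x ^ γ := rpow_sub_one_mul_sub_le hγ hx hxy
  · calc
      y ^ γ - x ^ γ ≤ γ * y ^ (γ - 1) * (y - x) := rpow_sub_rpow_le_mul_sub hγ hx hy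
      _ ≤ γ * (x + y) ^ (γ - 1) * (y - x) := by
        gcongr
        linarith

theorem rpow_add_bounds_of_le_one (hγ₀ : 0 < γ) (hγ₁ : γ ≤ 1) (hx : 0 ≤ x) (hy : 0 ≤ y) :
    γ * (x + y) ^ (γ - 1) * (x + y) ≤ x ^ γ + y ^ γ ∧
      x ^ γ + y ^ γ ≤ 2 ^ (1 - γ) * (x + y) ^ (γ - 1) * (x + y) := by
  have hs : 0 ≤ x + y := add_nonneg hx hy
  rw [two_rpow_one_sub_mul_rpow_sub_one_mul_self hγ₀.ne' hs, mul_assoc,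
    rpow_sub_one_mul_self hγ₀.ne' hs]
  refine ⟨?_, rpow_add_rpow_le_two_mul_rpow_half_add hγ₀.le hγ₁ hx hy⟩
  calc
    γ * (x + y) ^ γ ≤ (x + y) ^ γ := mul_le_of_le_one_left (by positivity) hγ₁
    _ ≤ x ^ γ + y ^ γ := Real.rpow_add_le_add_rpow hx hy hγ₀.le hγ₁

theorem rpow_add_bounds_of_one_le (hγ : 1 ≤ γ) (hx : 0 ≤ x) (hy : 0 ≤ y) :
    2 ^ (1 - γ) * (x + y) ^ (γ - 1) * (x + y) ≤ x ^ γ + y ^ γ ∧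
      x ^ γ + y ^ γ ≤ γ * (x + y) ^ (γ - 1) * (x + y) := by
  have hγ₀ : γ ≠ 0 := by positivity
  have hs : 0 ≤ x + y := add_nonneg hx hy
  rw [two_rpow_one_sub_mul_rpow_sub_one_mul_self hγ₀ hs, mul_assoc, rpow_sub_one_mul_self hγ₀ hs]
  refine ⟨two_mul_rpow_half_add_le hγ hx hy, ?_⟩
  calc
    x ^ γ + y ^ γ ≤ (x + y) ^ γ := Real.add_rpow_le_rpow_add hx hy hγ
    _ ≤ γ * (x + y) ^ γ := le_mul_of_one_le_left (by positivity) hγ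

end PowerBounds

section Sign

variable {γ a b : ℝ}

theorem abs_sub_eq_abs_abs_sub_abs (hab : 0 ≤ a * b) : |b - a| = |(|b| - |a|)| := by
  rcases mul_nonneg_iff.1 hab with ⟨ha, hb⟩ | ⟨ha, hb⟩
  · rw [abs_of_nonneg ha, abs_of_nonneg hb]
  · rw [abs_of_nonpos ha, abs_of_nonpos hb, neg_sub_neg, abs_sub_comm]

theorem abs_sub_eq_abs_add_abs (hab : a * b ≤ 0) : |b - a| = |a| + |b| := by
  rw [sub_eq_neg_add, ← abs_neg a, abs_add_eq_add_abs_iff]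
  simpa only [Left.nonneg_neg_iff, Left.neg_nonpos_iff] using mul_nonpos_iff.1 hab |>.symm

theorem abs_sgnPow (hγ : γ ≠ 0) (a : ℝ) : |sgnPow γ a| = |a| ^ γ := by
  rw [sgnPow, abs_mul, Real.abs_rpow_of_nonneg (abs_nonneg a), abs_abs,
    rpow_sub_one_mul_self hγ (abs_nonneg a)]

theorem sgnPow_mul_sgnPow (γ a b : ℝ) :
    sgnPow γ a * sgnPow γ b = |a| ^ (γ - 1) * |b| ^ (γ - 1) * (a * b) :=
  mul_mul_mul_comm _ _ _ _

theorem abs_sgnPow_sub_of_mul_nonneg (hγ : γ ≠ 0) (hab : 0 ≤ a * b) :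
    |sgnPow γ b - sgnPow γ a| = |(|b| ^ γ - |a| ^ γ)| := by
  rw [abs_sub_eq_abs_abs_sub_abs, abs_sgnPow hγ, abs_sgnPow hγ]
  rw [sgnPow_mul_sgnPow]
  positivity

theorem abs_sgnPow_sub_of_mul_nonpos (hγ : γ ≠ 0) (hab : a * b ≤ 0) :
    |sgnPow γ b - sgnPow γ a| = |a| ^ γ + |b| ^ γ := by
  rw [abs_sub_eq_abs_add_abs, abs_sgnPow hγ, abs_sgnPow hγ]
  rw [sgnPow_mul_sgnPow]
  exact mul_nonpos_of_nonneg_of_nonpos (by positivity) hab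

end Sign

theorem sgnPow_diff_bounds (γ : ℝ) (hγ : 0 < γ) (a b : ℝ) :
    (if γ ≤ 1 then γ else (2 : ℝ) ^ (1 - γ)) * (|a| + |b|) ^ (γ - 1) * |b - a| ≤
        |sgnPow γ b - sgnPow γ a| ∧
      |sgnPow γ b - sgnPow γ a| ≤
        (if γ ≤ 1 then (2 : ℝ) ^ (1 - γ) else γ) * (|a| + |b|) ^ (γ - 1) * |b - a| := by
  wlog h : |a| ≤ |b| generalizing a b
  · simpa only [abs_sub_comm, add_comm] using this b a (le_of_not_ge h)
  rcases le_total 0 (a * b) with hab | hab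
  · have hpow : |a| ^ γ ≤ |b| ^ γ := by gcongr
    rw [abs_sgnPow_sub_of_mul_nonneg hγ.ne' hab, abs_sub_eq_abs_abs_sub_abs hab,
      abs_of_nonneg (sub_nonneg.2 h), abs_of_nonneg (sub_nonneg.2 hpow)]
    split_ifs with hγ₁
    · exact rpow_sub_bounds_of_le_one hγ hγ₁ (abs_nonneg a) h
    · exact rpow_sub_bounds_of_one_le (le_of_not_ge hγ₁) (abs_nonneg a) h
  · rw [abs_sgnPow_sub_of_mul_nonpos hγ.ne' hab, abs_sub_eq_abs_add_abs hab]
    split_ifs with hγ₁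
    · exact rpow_add_bounds_of_le_one hγ hγ₁ (abs_nonneg a) (abs_nonneg b)
    · exact rpow_add_bounds_of_one_le (le_of_not_ge hγ₁) (abs_nonneg a) (abs_nonneg b)
end
end

section
/- Let n∈ℕ, γ∈[1,∞), K>0 and α∈[γ,∞). Then for all a,b∈ℝⁿ with |a| ≥ K one has |a|^γ ≤ 2^γ |a−b|^γ + 2^{α−1} K^{γ−α} |b|^α. -/
open MeasureTheory Metric Set
open scoped ENNReal

noncomputable section

/-!
Scaled by `|a|`, the worst case `K = |a|` reads `1 ≤ s ^ γ + t ^ α / 2` with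
`s = 2|a - b| / |a|` and `t = 2|b| / |a|`, where `s + t ≥ 2` by the triangle inequality.
If `s ≥ 1`, the first term suffices. If `s ≤ 1`, then `s ^ γ ≥ s ^ α`, and convexity of the
`α`-th power gives `(s ^ α + t ^ α) / 2 ≥ 1`.
Since `γ ≤ α`, a smaller `K` only enlarges the right-hand side.
-/

theorem one_le_rpow_add_rpow_div_two_of_two_le_add {s t γ α : ℝ} (hs : 0 ≤ s) (ht : 0 ≤ t)
    (hγ : 0 ≤ γ) (hγα : γ ≤ α) (hα : 1 ≤ α) (hst : 2 ≤ s + t) : 1 ≤ s ^ γ + t ^ α / 2 := by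
  rcases le_total 1 s with hs1 | hs1
  · have one_le_sγ : 1 ≤ s ^ γ := Real.one_le_rpow hs1 hγ
    have tα_nonneg : 0 ≤ t ^ α := Real.rpow_nonneg ht α
    linarith
  · have sα_le_sγ : s ^ α ≤ s ^ γ := Real.rpow_le_rpow_of_exponent_ge' hs hs1 hγ hγα
    have sα_nonneg : 0 ≤ s ^ α := Real.rpow_nonneg hs α
    have one_le_mean : 1 ≤ 1 / 2 * s ^ α + 1 / 2 * t ^ α :=
      calc 1 ≤ (1 / 2 * s + 1 / 2 * t) ^ α := Real.one_le_rpow (by linarith) (by linarith)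
        _ ≤ 1 / 2 * s ^ α + 1 / 2 * t ^ α :=
          (convexOn_rpow hα).2 hs ht (by norm_num) (by norm_num) (by norm_num)
    linarith

theorem rpow_le_two_rpow_mul_add_of_le_add {x y z γ α : ℝ} (hx : 0 < x) (hy : 0 ≤ y) (hz : 0 ≤ z)
    (hγ : 0 ≤ γ) (hγα : γ ≤ α) (hα : 1 ≤ α) (hxyz : x ≤ y + z) :
    x ^ γ ≤ 2 ^ γ * y ^ γ + 2 ^ (α - 1) * x ^ (γ - α) * z ^ α := by
  have hsum : 2 ≤ 2 * y / x + 2 * z / x := by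
    rw [← add_div, le_div_iff₀ hx]
    linarith
  calc x ^ γ ≤ x ^ γ * ((2 * y / x) ^ γ + (2 * z / x) ^ α / 2) :=
        le_mul_of_one_le_right (by positivity) <|
          one_le_rpow_add_rpow_div_two_of_two_le_add (by positivity) (by positivity) hγ hγα hα hsum
    _ = 2 ^ γ * y ^ γ + 2 ^ (α - 1) * x ^ (γ - α) * z ^ α := by
        rw [Real.div_rpow (by positivity) hx.le, Real.div_rpow (by positivity) hx.le,
          Real.mul_rpow zero_le_two hy, Real.mul_rpow zero_le_two hz,
          Real.rpow_sub_one two_ne_zero, Real.rpow_sub hx]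
        field_simp

theorem norm_rpow_le_superlevel_general {E : Type*} [SeminormedAddGroup E] {γ K α : ℝ}
    (hγ : 0 ≤ γ) (hγα : γ ≤ α) (hα : 1 ≤ α) (hK : 0 < K) (a b : E) (ha : K ≤ ‖a‖) :
    ‖a‖ ^ γ ≤ 2 ^ γ * ‖a - b‖ ^ γ + 2 ^ (α - 1) * K ^ (γ - α) * ‖b‖ ^ α := by
  have norm_rpow_le_rpow : ‖a‖ ^ (γ - α) ≤ K ^ (γ - α) :=
    Real.rpow_le_rpow_of_nonpos hK ha (sub_nonpos.mpr hγα)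
  have triangle : ‖a‖ ≤ ‖a - b‖ + ‖b‖ := by simpa only [sub_add_cancel] using norm_add_le (a - b) b
  calc ‖a‖ ^ γ ≤ 2 ^ γ * ‖a - b‖ ^ γ + 2 ^ (α - 1) * ‖a‖ ^ (γ - α) * ‖b‖ ^ α :=
        rpow_le_two_rpow_mul_add_of_le_add (hK.trans_le ha) (norm_nonneg _) (norm_nonneg _)
          hγ hγα hα triangle
    _ ≤ 2 ^ γ * ‖a - b‖ ^ γ + 2 ^ (α - 1) * K ^ (γ - α) * ‖b‖ ^ α := by gcongr

theorem norm_rpow_le_superlevel (n : ℕ) (γ K α : ℝ) (hγ : 1 ≤ γ) (hK : 0 < K) (hα : γ ≤ α)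
    (a b : EuclideanSpace ℝ (Fin n)) (ha : K ≤ ‖a‖) :
    ‖a‖ ^ γ ≤ (2 : ℝ) ^ γ * ‖a - b‖ ^ γ + (2 : ℝ) ^ (α - 1) * K ^ (γ - α) * ‖b‖ ^ α :=
  norm_rpow_le_superlevel_general (zero_le_one.trans hγ) hα (hγ.trans hα) hK a b ha
end
end

section
/- Let n∈ℕ, p>1 and α∈(0,1). Then there exists a constant c = c(n,p,α) > 0 such that for every R>0 and every function u:ℝⁿ→ℝ that is continuously differentiable on an open set containing the closed ball B̄_R (centered at any point) one has ‖∇u‖_{L^p(B_R)} ≤ (c/R) ‖u‖_{L^p(B_R)} + c ‖u‖_{L^p(B_R)}^{α/(1+α)} [∇u]_{W^{α,p}(B_R)}^{1/(1+α)}, where [∇u]_{W^{α,p}(B_R)} := (∬_{B_R×B_R} |∇u(x)−∇u(y)|^p/|x−y|^{n+αp} dx dy)^{1/p} (the inequality being interpreted as trivially true if this seminorm is infinite). -/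
open MeasureTheory Metric Set
open scoped ENNReal

noncomputable section

/-- Gagliardo seminorm of the gradient `[∇u]_{W^{α,p}(D)}` in `ℝ≥0∞`. -/
def gagliardoGradE (n : ℕ) (α p : ℝ) (D : Set (EuclideanSpace ℝ (Fin n)))
    (u : EuclideanSpace ℝ (Fin n) → ℝ) : ℝ≥0∞ :=
  (∫⁻ x in D, ∫⁻ y in D,
      ENNReal.ofReal (‖gradient u x - gradient u y‖ ^ p / dist x y ^ ((n : ℝ) + α * p))) ^ (1 / p)

/-!
Let `φ` be a bump function supported in a ball `B'` of radius `ε`. Since `∫ D(φ u) = 0`, for every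
`x` the vector `(∫ φ) Du(x)` equals `∫ φ(y) (Du(x) - Du(y)) dy - ∫ u(y) Dφ(y) dy`, so `|Du(x)|` is
at most a constant times the average over `B'` of `|Du(x) - Du(y)| + |u(y)| / ε`. For `ε ≤ R` and
`x` in `B_R`, such a ball `B'` exists inside both `B_R` and `B(x, 2ε)`. Raising to the power `p` and
integrating in `x` (Jensen and Fubini) gives `‖Du‖_p ≤ C (ε ^ α [Du]_{α,p} + ‖u‖_p / ε)` for all
`0 < ε ≤ R`, and it remains to optimise in `ε`.
-/

open Module
open scoped NNReal

section Interpolation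

variable {A C G R U : ℝ≥0∞} {α : ℝ}

lemma div_rpow_mul_le_of_rpow_mul_rpow_le {M : ℝ≥0∞} (hα : 0 ≤ α) (hM₀ : M ≠ 0) (hM : M ≠ ⊤)
    (h : U ^ (α / (1 + α)) * G ^ (1 / (1 + α)) ≤ M) : (U / M) ^ α * G ≤ M := by
  have hα' : 0 < 1 + α := by positivity
  have hUG : U ^ α * G ≤ M * M ^ α := by
    calc U ^ α * G = (U ^ (α / (1 + α)) * G ^ (1 / (1 + α))) ^ (1 + α) := by
          rw [ENNReal.mul_rpow_of_nonneg _ _ hα'.le, ← ENNReal.rpow_mul, ← ENNReal.rpow_mul,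
            div_mul_cancel₀ _ hα'.ne', one_div_mul_cancel hα'.ne', ENNReal.rpow_one]
      _ ≤ M ^ (1 + α) := by gcongr
      _ = M * M ^ α := by rw [ENNReal.rpow_add _ _ hM₀ hM, ENNReal.rpow_one]
  calc (U / M) ^ α * G = U ^ α * G / M ^ α := by
        rw [ENNReal.div_rpow_of_nonneg _ _ hα, div_eq_mul_inv, div_eq_mul_inv, mul_right_comm]
    _ ≤ M := ENNReal.div_le_of_le_mul hUG

-- With `M` the sum on the right, `ε = U / M` is admissible and makes `U / ε` equal to `M`.
lemma le_of_forall_le_rpow_mul_add_div (hα : 0 ≤ α) (hR₀ : R ≠ 0) (hR : R ≠ ⊤)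
    (hU : U = 0 → A = 0) (h : ∀ ε, ε ≠ 0 → ε ≤ R → A ≤ C * (ε ^ α * G + U / ε)) :
    A ≤ 2 * C * (U / R + U ^ (α / (1 + α)) * G ^ (1 / (1 + α))) := by
  set M := U / R + U ^ (α / (1 + α)) * G ^ (1 / (1 + α)) with hM_def
  rcases eq_or_ne U 0 with hU₀ | hU₀
  · simp [hU hU₀]
  rcases eq_or_ne C 0 with rfl | hC
  · simpa using h R hR₀ le_rfl
  rcases eq_or_ne M ⊤ with hM | hM
  · simp [hM, ENNReal.mul_top, hC]
  have hUR : U / R ≤ M := le_self_add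
  have hM₀ : M ≠ 0 := ((ENNReal.div_pos hU₀ hR).trans_le hUR).ne'
  have hU_top : U ≠ ⊤ := by
    rintro rfl
    simp [ENNReal.top_div, hR, hM] at hUR
  have hεR : U / M ≤ R := by
    rw [ENNReal.div_le_iff hM₀ hM, mul_comm]
    exact (ENNReal.div_le_iff hR₀ hR).1 hUR
  calc A ≤ C * ((U / M) ^ α * G + U / (U / M)) := h _ (ENNReal.div_pos hU₀ hM).ne' hεR
    _ ≤ C * (M + M) := by
        rw [ENNReal.div_div_cancel hU₀ hU_top]
        gcongr
        exact div_rpow_mul_le_of_rpow_mul_rpow_le hα hM₀ hM le_add_self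
    _ = 2 * C * M := by ring

end Interpolation

lemma laverage_rpow_le {X : Type*} [MeasurableSpace X] {ν : Measure X} [IsFiniteMeasure ν]
    [NeZero ν] {f : X → ℝ≥0∞} {p : ℝ} (hp : 1 ≤ p) (hf : AEMeasurable f ν) :
    (⨍⁻ x, f x ∂ν) ^ p ≤ ⨍⁻ x, f x ^ p ∂ν := by
  have hp₀ : 0 < p := by positivity
  have h := eLpNorm'_le_eLpNorm'_of_exponent_le one_pos hp ((ν univ)⁻¹ • ν)
    (hf.smul_measure _).aestronglyMeasurable
  simp only [eLpNorm', enorm_eq_self, ENNReal.rpow_one, one_div, inv_one] at h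
  exact (ENNReal.le_rpow_inv_iff hp₀).1 h

lemma exists_ball_subset_ball_inter_ball {E : Type*} [SeminormedAddCommGroup E] [NormedSpace ℝ E]
    {x x₀ : E} {ε R : ℝ} (hε : 0 < ε) (hεR : ε ≤ R) (hx : x ∈ ball x₀ R) :
    ∃ z, ball z ε ⊆ ball x₀ R ∩ ball x (2 * ε) := by
  have hR : 0 < R := hε.trans_le hεR
  have ht : ε / R ≤ 1 := (div_le_one hR).2 hεR
  have hxx₀ : dist x x₀ ≤ R := (mem_ball.1 hx).le
  refine ⟨AffineMap.lineMap x x₀ (ε / R),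
    subset_inter (ball_subset_ball' ?_) (ball_subset_ball' ?_)⟩
  · calc ε + dist (AffineMap.lineMap x x₀ (ε / R)) x₀ = ε + (1 - ε / R) * dist x x₀ := by
          rw [dist_lineMap_right, Real.norm_of_nonneg (by linarith)]
      _ ≤ ε + (1 - ε / R) * R := by gcongr
      _ = R := by field_simp; ring
  · calc ε + dist (AffineMap.lineMap x x₀ (ε / R)) x = ε + ε / R * dist x x₀ := by
          rw [dist_lineMap_left, Real.norm_of_nonneg (by positivity)]
      _ ≤ ε + ε / R * R := by gcongr
      _ = 2 * ε := by field_simp; ring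

section BallIntegral

variable {X : Type*} [PseudoMetricSpace X] [SecondCountableTopology X] [MeasurableSpace X]
  [OpensMeasurableSpace X] {ν : Measure X} {w : X → ℝ≥0∞}

lemma aemeasurable_indicator_ball (hw : AEMeasurable w ν) (r : ℝ) :
    AEMeasurable (fun q : X × X ↦ (ball q.1 r).indicator w q.2) (ν.prod ν) := by
  have h_eq : (fun q : X × X ↦ (ball q.1 r).indicator w q.2) =
      {q : X × X | dist q.2 q.1 < r}.indicator (fun q ↦ w q.2) := rfl
  rw [h_eq]
  exact hw.comp_snd.indicator (isOpen_lt (by fun_prop) continuous_const).measurableSet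

variable [SFinite ν]

lemma aemeasurable_setLIntegral_ball (hw : AEMeasurable w ν) (r : ℝ) :
    AEMeasurable (fun x ↦ ∫⁻ y in ball x r, w y ∂ν) ν := by
  simpa only [lintegral_indicator measurableSet_ball] using
    (aemeasurable_indicator_ball hw r).lintegral_prod_right'

lemma lintegral_setLIntegral_ball (hw : AEMeasurable w ν) (r : ℝ) :
    ∫⁻ x, ∫⁻ y in ball x r, w y ∂ν ∂ν = ∫⁻ y, w y * ν (ball y r) ∂ν := by
  simp_rw [← lintegral_indicator (measurableSet_ball (ε := r))]
  rw [lintegral_lintegral_swap (aemeasurable_indicator_ball hw r)]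
  congr 1 with y
  have h_symm (x : X) : (ball x r).indicator w y = (ball y r).indicator (fun _ ↦ w y) x := by
    simp [indicator, dist_comm]
  simp_rw [h_symm, lintegral_indicator measurableSet_ball, setLIntegral_const]

end BallIntegral

section SMul

variable {E F : Type*} [NormedAddCommGroup E] [NormedSpace ℝ E] [NormedAddCommGroup F]
  [NormedSpace ℝ F] {U : Set E} {φ : E → ℝ} {u : E → F}

lemma contDiff_smul_of_tsupport_subset (hU : IsOpen U)
    (hφ : ContDiff ℝ 1 φ) (hφU : tsupport φ ⊆ U) (hu : ContDiffOn ℝ 1 u U) :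
    ContDiff ℝ 1 (fun x ↦ φ x • u x) := by
  refine contMDiff_iff_contDiff.1 (contMDiff_of_tsupport fun x hx ↦ ?_)
  have hxU : x ∈ U := hφU (tsupport_smul_subset_left φ u hx)
  exact (hφ.contDiffAt.smul (hu.contDiffAt (hU.mem_nhds hxU))).contMDiffAt

lemma fderiv_smul_of_tsupport_subset (hU : IsOpen U)
    (hφ : ContDiff ℝ 1 φ) (hφU : tsupport φ ⊆ U) (hu : ContDiffOn ℝ 1 u U) (x : E) :
    fderiv ℝ (fun x ↦ φ x • u x) x = φ x • fderiv ℝ u x + (fderiv ℝ φ x).smulRight (u x) := by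
  by_cases hx : x ∈ tsupport φ
  · exact fderiv_fun_smul (hφ.differentiable one_ne_zero x)
      ((hu.contDiffAt (hU.mem_nhds (hφU hx))).differentiableAt one_ne_zero)
  · have hφx : φ =ᶠ[nhds x] 0 := notMem_tsupport_iff_eventuallyEq.1 hx
    have h_smul : (fun x ↦ φ x • u x) =ᶠ[nhds x] fun _ ↦ 0 := hφx.mono fun y hy ↦ by simp [hy]
    ext v
    simp [h_smul.fderiv_eq, hφx.fderiv_eq, hφx.self_of_nhds]

end SMul

section BumpAverage

variable {E : Type*} [NormedAddCommGroup E] [NormedSpace ℝ E] [FiniteDimensional ℝ E]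

lemma exists_enorm_fderiv_contDiffBump_le {t : ℝ} (ht : 1 < t) :
    ∃ K : ℝ≥0, ∀ (c : E) (φ : ContDiffBump c), φ.rOut / φ.rIn = t →
      ∀ x, ‖fderiv ℝ φ x‖ₑ ≤ K / ENNReal.ofReal φ.rIn := by
  let φ₀ : ContDiffBump (0 : E) := ⟨1, t, one_pos, ht⟩
  have hφ₀ : ContDiff ℝ 1 φ₀ := φ₀.contDiff
  obtain ⟨K, hK⟩ := (φ₀.hasCompactSupport.fderiv (𝕜 := ℝ)).exists_bound_of_continuous
    (hφ₀.continuous_fderiv one_ne_zero)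
  refine ⟨K.toNNReal, fun c φ hφ x ↦ ?_⟩
  have h_eq : (φ : E → ℝ) = fun x ↦ φ₀ (φ.rIn⁻¹ • (x - c)) := by
    ext x
    simp [ContDiffBump.apply, φ₀, hφ]
  have h_inner : HasFDerivAt (fun x : E ↦ φ.rIn⁻¹ • (x - c))
      (φ.rIn⁻¹ • ContinuousLinearMap.id ℝ E) x := ((hasFDerivAt_id x).sub_const c).const_smul _
  have h_fderiv : fderiv ℝ φ x = φ.rIn⁻¹ • fderiv ℝ φ₀ (φ.rIn⁻¹ • (x - c)) := by
    rw [h_eq]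
    refine (((hφ₀.differentiable one_ne_zero _).hasFDerivAt.comp x h_inner).congr_fderiv ?_).fderiv
    ext v
    simp
  rw [h_fderiv, enorm_smul, enorm_inv φ.rIn_pos.ne', Real.enorm_of_nonneg φ.rIn_pos.le,
    ← ENNReal.div_eq_inv_mul, ← ofReal_norm]
  gcongr
  exact ENNReal.ofReal_le_ofReal (hK _)

variable [MeasurableSpace E] [BorelSpace E] {μ : Measure E} [μ.IsAddHaarMeasure]

lemma addHaar_ball_le_mul_enorm_integral_contDiffBump {c : E} (φ : ContDiffBump c) {t : ℝ}
    (ht : 0 < t) :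
    μ (ball c (t * φ.rIn)) ≤ ENNReal.ofReal (t ^ finrank ℝ E) * ‖∫ x, φ x ∂μ‖ₑ := by
  rw [Measure.addHaar_ball_mul_of_pos μ c ht, ← Measure.addHaar_ball_center μ c,
    Real.enorm_of_nonneg φ.integral_pos.le]
  gcongr
  calc μ (ball c φ.rIn) ≤ μ (closedBall c φ.rIn) := measure_mono ball_subset_closedBall
    _ = ENNReal.ofReal (μ.real (closedBall c φ.rIn)) :=
      (ofReal_measureReal measure_closedBall_lt_top.ne).symm
    _ ≤ ENNReal.ofReal (∫ x, φ x ∂μ) :=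
      ENNReal.ofReal_le_ofReal (φ.measure_closedBall_le_integral μ)

variable {F : Type*} [NormedAddCommGroup F] [NormedSpace ℝ F]

lemma integral_fderiv_eq_zero {f : E → F} (hf : ContDiff ℝ 1 f) (hf_supp : HasCompactSupport f) :
    ∫ x, fderiv ℝ f x ∂μ = 0 := by
  have h_int : Integrable (fderiv ℝ f) μ :=
    (hf.continuous_fderiv one_ne_zero).integrable_of_hasCompactSupport (hf_supp.fderiv (𝕜 := ℝ))
  ext v
  rw [ContinuousLinearMap.integral_apply h_int]
  simpa using integral_smul_fderiv_eq_neg_fderiv_smul_of_integrable (μ := μ)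
    (f := fun _ ↦ (1 : ℝ)) (g := f) (v := v) (by simp)
    (by simpa using h_int.apply_continuousLinearMap v)
    (by simpa using hf.continuous.integrable_of_hasCompactSupport hf_supp)
    (fun _ _ ↦ by fun_prop) (fun x _ ↦ hf.differentiable one_ne_zero x)

variable [CompleteSpace F]

-- `∫ D(φ u) = 0`, so `(∫ φ) a` is the integral of `φ a - D(φ u) = φ (a - Du) - u Dφ`.
lemma enorm_integral_mul_enorm_le {U : Set E} {φ : E → ℝ} {u : E → F} (hU : IsOpen U)
    (hφ : ContDiff ℝ 1 φ) (hφ_supp : HasCompactSupport φ) (hφU : tsupport φ ⊆ U)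
    (hu : ContDiffOn ℝ 1 u U) (a : E →L[ℝ] F) :
    ‖∫ x, φ x ∂μ‖ₑ * ‖a‖ₑ ≤
      ∫⁻ x in U, (‖φ x‖ₑ * ‖a - fderiv ℝ u x‖ₑ + ‖fderiv ℝ φ x‖ₑ * ‖u x‖ₑ) ∂μ := by
  set h : E → F := fun x ↦ φ x • u x
  have hh : ContDiff ℝ 1 h := contDiff_smul_of_tsupport_subset hU hφ hφU hu
  have hh_supp : HasCompactSupport h := hφ_supp.smul_right
  have hφ_int : Integrable φ μ := hφ.continuous.integrable_of_hasCompactSupport hφ_supp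
  have hh_int : Integrable (fderiv ℝ h) μ :=
    (hh.continuous_fderiv one_ne_zero).integrable_of_hasCompactSupport (hh_supp.fderiv (𝕜 := ℝ))
  have h_fderiv (x : E) : φ x • a - fderiv ℝ h x =
      φ x • (a - fderiv ℝ u x) - (fderiv ℝ φ x).smulRight (u x) := by
    rw [fderiv_smul_of_tsupport_subset hU hφ hφU hu, smul_sub]
    abel
  have h_smul : (∫ x, φ x ∂μ) • a =
      ∫ x, (φ x • (a - fderiv ℝ u x) - (fderiv ℝ φ x).smulRight (u x)) ∂μ := by
    simp_rw [← h_fderiv]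
    rw [integral_sub (hφ_int.smul_const a) hh_int, integral_fderiv_eq_zero hh hh_supp, sub_zero,
      integral_smul_const]
  have h_zero : ∀ x ∉ U, φ x • (a - fderiv ℝ u x) - (fderiv ℝ φ x).smulRight (u x) = 0 := by
    intro x hx
    have hφx : φ =ᶠ[nhds x] 0 := notMem_tsupport_iff_eventuallyEq.1 fun hx' ↦ hx (hφU hx')
    ext v
    simp [hφx.fderiv_eq, hφx.self_of_nhds]
  rw [← enorm_smul, h_smul, ← setIntegral_eq_integral_of_forall_compl_eq_zero h_zero]
  refine (enorm_integral_le_lintegral_enorm _).trans (lintegral_mono fun x ↦ ?_)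
  refine enorm_sub_le.trans_eq ?_
  simp [enorm_eq_nnnorm, nnnorm_smul, ContinuousLinearMap.nnnorm_smulRight_apply]

lemma exists_contDiffBump_ball (μ : Measure E) [μ.IsAddHaarMeasure] :
    ∃ K L : ℝ≥0, ∀ (z : E) (ε : ℝ), 0 < ε → ∃ φ : ContDiffBump z, tsupport φ ⊆ ball z ε ∧
      μ (ball z ε) ≤ K * ‖∫ x, φ x ∂μ‖ₑ ∧ ∀ x, ‖fderiv ℝ φ x‖ₑ ≤ L / ENNReal.ofReal ε := by
  obtain ⟨L, hL⟩ := exists_enorm_fderiv_contDiffBump_le (E := E) one_lt_two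
  refine ⟨4 ^ finrank ℝ E, L * 4, fun z ε hε ↦ ?_⟩
  let φ : ContDiffBump z := ⟨ε / 4, ε / 2, by positivity, by linarith⟩
  refine ⟨φ, φ.tsupport_eq.trans_subset (closedBall_subset_ball (half_lt_self hε)), ?_,
    fun x ↦ (hL z φ (by simp only [φ]; field_simp; norm_num) x).trans_eq ?_⟩
  · simpa [φ, mul_div_cancel₀, ENNReal.ofReal_pow] using
      addHaar_ball_le_mul_enorm_integral_contDiffBump (μ := μ) φ four_pos
  · rw [ENNReal.ofReal_div_of_pos four_pos, ENNReal.ofReal_ofNat, ENNReal.div_eq_inv_mul,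
      ENNReal.inv_div (by simp) (by simp), ENNReal.coe_mul, ENNReal.coe_ofNat,
      mul_div_assoc, mul_comm]

lemma exists_enorm_le_mul_laverage (μ : Measure E) [μ.IsAddHaarMeasure] (F : Type*)
    [NormedAddCommGroup F] [NormedSpace ℝ F] [CompleteSpace F] :
    ∃ C : ℝ≥0, ∀ (z : E) (ε : ℝ) (u : E → F) (a : E →L[ℝ] F), 0 < ε →
      ContDiffOn ℝ 1 u (ball z ε) →
        ‖a‖ₑ ≤ C * ⨍⁻ x in ball z ε, (‖a - fderiv ℝ u x‖ₑ + ‖u x‖ₑ / ENNReal.ofReal ε) ∂μ := by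
  obtain ⟨K, L, hKL⟩ := exists_contDiffBump_ball μ
  refine ⟨K * (1 + L), fun z ε u a hε hu ↦ ?_⟩
  obtain ⟨φ, hφ_ball, hφ_int, hφ_fderiv⟩ := hKL z ε hε
  have hφ_le (x : E) : ‖φ x‖ₑ ≤ 1 := by
    rw [Real.enorm_of_nonneg φ.nonneg, ENNReal.ofReal_le_one]
    exact φ.le_one
  have h_bound (x : E) : ‖φ x‖ₑ * ‖a - fderiv ℝ u x‖ₑ + ‖fderiv ℝ φ x‖ₑ * ‖u x‖ₑ ≤
      (1 + L) * (‖a - fderiv ℝ u x‖ₑ + ‖u x‖ₑ / ENNReal.ofReal ε) := by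
    rw [mul_add, ← mul_div_assoc, ENNReal.mul_div_right_comm]
    gcongr
    · exact (hφ_le x).trans le_self_add
    · exact (hφ_fderiv x).trans (by gcongr; exact le_add_self)
  rw [setLAverage_eq, ← mul_div_assoc, ENNReal.le_div_iff_mul_le
    (.inl (measure_ball_pos μ z hε).ne') (.inl measure_ball_lt_top.ne)]
  calc ‖a‖ₑ * μ (ball z ε) ≤ K * (‖∫ x, φ x ∂μ‖ₑ * ‖a‖ₑ) := by
        rw [← mul_assoc, mul_comm]
        gcongr
    _ ≤ K * ∫⁻ x in ball z ε, (1 + L) * (‖a - fderiv ℝ u x‖ₑ + ‖u x‖ₑ / ENNReal.ofReal ε) ∂μ := by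
      gcongr
      exact (enorm_integral_mul_enorm_le isOpen_ball φ.contDiff φ.hasCompactSupport hφ_ball hu
        a).trans (lintegral_mono h_bound)
    _ = _ := by
      rw [lintegral_const_mul' _ _ (by finiteness), ← mul_assoc]
      push_cast
      rfl

lemma exists_rpow_enorm_le_mul_laverage (μ : Measure E) [μ.IsAddHaarMeasure] (F : Type*)
    [NormedAddCommGroup F] [NormedSpace ℝ F] [CompleteSpace F] {p : ℝ} (hp : 1 ≤ p) :
    ∃ C : ℝ≥0, ∀ (z : E) (ε : ℝ) (u : E → F) (a : E →L[ℝ] F), 0 < ε →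
      ContDiffOn ℝ 1 u (ball z ε) → ‖a‖ₑ ^ p ≤
        C * ⨍⁻ x in ball z ε, (‖a - fderiv ℝ u x‖ₑ ^ p + (‖u x‖ₑ / ENNReal.ofReal ε) ^ p) ∂μ := by
  have hp₀ : 0 ≤ p := by positivity
  obtain ⟨C, hC⟩ := exists_enorm_le_mul_laverage μ F
  refine ⟨C ^ p * 2 ^ (p - 1), fun z ε u a hε hu ↦ ?_⟩
  have h_meas : AEMeasurable (fun x ↦ ‖a - fderiv ℝ u x‖ₑ + ‖u x‖ₑ / ENNReal.ofReal ε)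
      (μ.restrict (ball z ε)) := by
    have h_fderiv := hu.continuousOn_fderiv_of_isOpen isOpen_ball le_rfl
    exact ((continuousOn_const.sub h_fderiv).enorm.aemeasurable measurableSet_ball).add
      ((hu.continuousOn.enorm.aemeasurable measurableSet_ball).div_const _)
  have : NeZero (μ.restrict (ball z ε)) := ⟨by simpa using (measure_ball_pos μ z hε).ne'⟩
  have : IsFiniteMeasure (μ.restrict (ball z ε)) := ⟨by simpa using measure_ball_lt_top⟩
  calc ‖a‖ₑ ^ p
      ≤ (C * ⨍⁻ x in ball z ε, (‖a - fderiv ℝ u x‖ₑ + ‖u x‖ₑ / ENNReal.ofReal ε) ∂μ) ^ p := by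
        gcongr
        exact hC z ε u a hε hu
    _ ≤ C ^ p * ⨍⁻ x in ball z ε,
          (‖a - fderiv ℝ u x‖ₑ + ‖u x‖ₑ / ENNReal.ofReal ε) ^ p ∂μ := by
        rw [ENNReal.mul_rpow_of_nonneg _ _ hp₀]
        gcongr
        exact laverage_rpow_le hp h_meas
    _ ≤ C ^ p * ⨍⁻ x in ball z ε, 2 ^ (p - 1) *
          (‖a - fderiv ℝ u x‖ₑ ^ p + (‖u x‖ₑ / ENNReal.ofReal ε) ^ p) ∂μ := by
        simp only [laverage]
        gcongr
        exact ENNReal.rpow_add_le_mul_rpow_add_rpow _ _ hp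
    _ = _ := by
        have hp₁ : 0 ≤ p - 1 := by linarith
        rw [laverage, lintegral_const_mul' _ _ (by finiteness), ← mul_assoc, ENNReal.coe_mul,
          ENNReal.coe_rpow_of_nonneg _ hp₀, ENNReal.coe_rpow_of_nonneg _ hp₁]
        rfl

end BumpAverage

lemma setLIntegral_ball_rpow_enorm_sub_le {X G : Type*} [MetricSpace X] [MeasurableSpace X]
    [OpensMeasurableSpace X] [NormedAddCommGroup G] {ν : Measure X} {f : X → G}
    {p q r : ℝ} (hp : 0 < p) (hq : 0 ≤ q) (x : X) :
    ∫⁻ y in ball x r, ‖f x - f y‖ₑ ^ p ∂ν ≤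
      ENNReal.ofReal r ^ q * ∫⁻ y, ‖f x - f y‖ₑ ^ p / edist x y ^ q ∂ν := by
  have h_point : ∀ y ∈ ball x r, ‖f x - f y‖ₑ ^ p ≤
      ENNReal.ofReal r ^ q * (‖f x - f y‖ₑ ^ p / edist x y ^ q) := by
    intro y hy
    rcases eq_or_ne x y with rfl | hxy
    · simp [hp]
    have h_dist : edist x y ≤ ENNReal.ofReal r := by
      rw [edist_dist, dist_comm]
      exact ENNReal.ofReal_le_ofReal (mem_ball.1 hy).le
    have h_pos : edist x y ^ q ≠ 0 :=
      (ENNReal.rpow_pos (edist_pos.2 hxy) (edist_ne_top x y)).ne'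
    have h_top : edist x y ^ q ≠ ⊤ := ENNReal.rpow_ne_top_of_nonneg hq (edist_ne_top x y)
    calc ‖f x - f y‖ₑ ^ p = edist x y ^ q * (‖f x - f y‖ₑ ^ p / edist x y ^ q) :=
          (ENNReal.mul_div_cancel h_pos h_top).symm
      _ ≤ ENNReal.ofReal r ^ q * (‖f x - f y‖ₑ ^ p / edist x y ^ q) := by gcongr
  calc ∫⁻ y in ball x r, ‖f x - f y‖ₑ ^ p ∂ν
      ≤ ∫⁻ y in ball x r, ENNReal.ofReal r ^ q * (‖f x - f y‖ₑ ^ p / edist x y ^ q) ∂ν :=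
        setLIntegral_mono' measurableSet_ball h_point
    _ ≤ ∫⁻ y, ENNReal.ofReal r ^ q * (‖f x - f y‖ₑ ^ p / edist x y ^ q) ∂ν :=
        setLIntegral_le_lintegral _ _
    _ = _ := lintegral_const_mul' _ _ (ENNReal.rpow_ne_top_of_nonneg hq ENNReal.ofReal_ne_top)

lemma eLpNorm'_fderiv_eq_zero {E F : Type*} [NormedAddCommGroup E] [NormedSpace ℝ E]
    [MeasurableSpace E] [OpensMeasurableSpace E] [SecondCountableTopology E]
    [NormedAddCommGroup F] [NormedSpace ℝ F] {μ : Measure E} [μ.IsOpenPosMeasure]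
    {U : Set E} {u : E → F} {p : ℝ} (hU : IsOpen U) (hp : 0 < p) (hu : ContinuousOn u U)
    (h : eLpNorm' u p (μ.restrict U) = 0) :
    eLpNorm' (fderiv ℝ u) p (μ.restrict U) = 0 := by
  have h_ae : u =ᵐ[μ.restrict U] 0 :=
    ae_eq_zero_of_eLpNorm'_eq_zero hp.le (hu.aestronglyMeasurable hU.measurableSet) h
  have h_zero : EqOn u 0 U := Measure.eqOn_open_of_ae_eq h_ae hU hu continuousOn_const
  have h_fderiv : EqOn (fderiv ℝ u) 0 U := fun x hx ↦ by
    simpa using (h_zero.eventuallyEq_of_mem (hU.mem_nhds hx)).fderiv_eq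
  rw [eLpNorm'_congr_ae (ae_restrict_of_forall_mem hU.measurableSet h_fderiv)]
  exact eLpNorm'_zero (ε := E →L[ℝ] F) hp

section GagliardoNirenberg

variable {E : Type*} [NormedAddCommGroup E] [NormedSpace ℝ E] [MeasurableSpace E]

/-- The `p`-th power of the Gagliardo (Sobolev–Slobodeckij) seminorm `[f]_{W^{s,p}(D)}` of `f` with
respect to `μ`, with values in `ℝ≥0∞`. At `x = y` the integrand is `0`, for `0 < p`. -/
def gagliardoEnergy {G : Type*} [NormedAddCommGroup G] (μ : Measure E) (s p : ℝ) (D : Set E)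
    (f : E → G) : ℝ≥0∞ :=
  ∫⁻ x in D, ∫⁻ y in D, ‖f x - f y‖ₑ ^ p / edist x y ^ (finrank ℝ E + s * p) ∂μ ∂μ

variable [BorelSpace E] [FiniteDimensional ℝ E] (μ : Measure E) [μ.IsAddHaarMeasure]
  (F : Type*) [NormedAddCommGroup F] [NormedSpace ℝ F] [CompleteSpace F] {p α : ℝ}

lemma exists_rpow_enorm_fderiv_le (hp : 1 ≤ p) :
    ∃ C : ℝ≥0, ∀ (R : ℝ) (x₀ : E) (u : E → F), ContDiffOn ℝ 1 u (ball x₀ R) →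
      ∀ ε, 0 < ε → ε ≤ R → ∀ x ∈ ball x₀ R,
        ‖fderiv ℝ u x‖ₑ ^ p ≤ C * ((∫⁻ y in ball x (2 * ε),
          (‖fderiv ℝ u x - fderiv ℝ u y‖ₑ ^ p + (‖u y‖ₑ / ENNReal.ofReal ε) ^ p)
            ∂μ.restrict (ball x₀ R)) / μ (ball 0 ε)) := by
  obtain ⟨C, hC⟩ := exists_rpow_enorm_le_mul_laverage μ F hp
  refine ⟨C, fun R x₀ u hu ε hε hεR x hx ↦ ?_⟩
  obtain ⟨z, hz⟩ := exists_ball_subset_ball_inter_ball hε hεR hx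
  refine (hC z ε u (fderiv ℝ u x) hε (hu.mono (hz.trans inter_subset_left))).trans ?_
  rw [setLAverage_eq, Measure.addHaar_ball_center, Measure.restrict_restrict measurableSet_ball,
    inter_comm]
  gcongr

lemma lintegral_setLIntegral_ball_restrict_le {D : Set E} {w : E → ℝ≥0∞}
    (hw : AEMeasurable w (μ.restrict D)) (r : ℝ) :
    ∫⁻ x in D, ∫⁻ y in ball x r, w y ∂μ.restrict D ∂μ ≤ (∫⁻ y in D, w y ∂μ) * μ (ball 0 r) := by
  calc ∫⁻ x in D, ∫⁻ y in ball x r, w y ∂μ.restrict D ∂μ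
      = ∫⁻ y in D, w y * μ.restrict D (ball y r) ∂μ := lintegral_setLIntegral_ball hw r
    _ ≤ ∫⁻ y in D, w y * μ (ball 0 r) ∂μ :=
        lintegral_mono fun y ↦ mul_le_mul' le_rfl
          ((Measure.restrict_apply_le D _).trans_eq (Measure.addHaar_ball_center μ y r))
    _ = _ := lintegral_mul_const' _ _ measure_ball_lt_top.ne

lemma exists_lintegral_rpow_enorm_fderiv_le_div_addHaar_ball (hp : 1 ≤ p) (hα : 0 ≤ α) :
    ∃ C : ℝ≥0, ∀ (R : ℝ) (x₀ : E) (u : E → F), ContDiffOn ℝ 1 u (ball x₀ R) →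
      ∀ ε, 0 < ε → ε ≤ R → ∫⁻ x in ball x₀ R, ‖fderiv ℝ u x‖ₑ ^ p ∂μ ≤
        C * ((ENNReal.ofReal (2 * ε) ^ (finrank ℝ E + α * p) *
            gagliardoEnergy μ α p (ball x₀ R) (fderiv ℝ u) +
          (∫⁻ x in ball x₀ R, (‖u x‖ₑ / ENNReal.ofReal ε) ^ p ∂μ) * μ (ball 0 (2 * ε))) /
            μ (ball 0 ε)) := by
  have hp₀ : 0 < p := by positivity
  have hq : 0 ≤ finrank ℝ E + α * p := by positivity
  obtain ⟨C, hC⟩ := exists_rpow_enorm_fderiv_le μ F hp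
  refine ⟨C, fun R x₀ u hu ε hε hεR ↦ ?_⟩
  set ν := μ.restrict (ball x₀ R)
  have hw : AEMeasurable (fun y ↦ (‖u y‖ₑ / ENNReal.ofReal ε) ^ p) ν :=
    ((hu.continuousOn.enorm.aemeasurable measurableSet_ball).div_const _).pow_const p
  have h_top : (μ (ball 0 ε))⁻¹ ≠ ⊤ := ENNReal.inv_ne_top.2 (measure_ball_pos μ 0 hε).ne'
  calc ∫⁻ x in ball x₀ R, ‖fderiv ℝ u x‖ₑ ^ p ∂μ
      ≤ ∫⁻ x in ball x₀ R, C * ((ENNReal.ofReal (2 * ε) ^ (finrank ℝ E + α * p) *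
          (∫⁻ y, ‖fderiv ℝ u x - fderiv ℝ u y‖ₑ ^ p / edist x y ^ (finrank ℝ E + α * p) ∂ν) +
          ∫⁻ y in ball x (2 * ε), (‖u y‖ₑ / ENNReal.ofReal ε) ^ p ∂ν) / μ (ball 0 ε)) ∂μ := by
        refine setLIntegral_mono' measurableSet_ball fun x hx ↦
          (hC R x₀ u hu ε hε hεR x hx).trans ?_
        rw [lintegral_add_right' _ hw.restrict]
        gcongr
        exact setLIntegral_ball_rpow_enorm_sub_le hp₀ hq x
    _ = C * ((ENNReal.ofReal (2 * ε) ^ (finrank ℝ E + α * p) *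
            gagliardoEnergy μ α p (ball x₀ R) (fderiv ℝ u) +
          ∫⁻ x, ∫⁻ y in ball x (2 * ε), (‖u y‖ₑ / ENNReal.ofReal ε) ^ p ∂ν ∂ν) /
            μ (ball 0 ε)) := by
        simp only [div_eq_mul_inv (_ + _)]
        rw [lintegral_const_mul' _ _ ENNReal.coe_ne_top, lintegral_mul_const' _ _ h_top,
          lintegral_add_right' _ (aemeasurable_setLIntegral_ball hw _),
          lintegral_const_mul' _ _ (ENNReal.rpow_ne_top_of_nonneg hq ENNReal.ofReal_ne_top)]
        rfl
    _ ≤ _ := by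
        gcongr
        exact lintegral_setLIntegral_ball_restrict_le μ hw _

lemma addHaar_ball_two_mul_div_addHaar_ball {ε : ℝ} (hε : 0 < ε) :
    μ (ball 0 (2 * ε)) / μ (ball 0 ε) = 2 ^ finrank ℝ E := by
  rw [Measure.addHaar_ball_mul_of_pos μ 0 two_pos, mul_div_assoc,
    ENNReal.div_self (measure_ball_pos μ 0 hε).ne' measure_ball_lt_top.ne, mul_one,
    ENNReal.ofReal_pow zero_le_two, ENNReal.ofReal_ofNat]

lemma ofReal_two_mul_rpow_div_addHaar_ball {ε : ℝ} (hε : 0 < ε) (q : ℝ) :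
    ENNReal.ofReal (2 * ε) ^ (finrank ℝ E + q) / μ (ball 0 ε) =
      2 ^ (finrank ℝ E + q) / μ (ball 0 1) * ENNReal.ofReal ε ^ q := by
  have hε₀ : ENNReal.ofReal ε ^ finrank ℝ E ≠ 0 := by simp [hε]
  have hε_top : ENNReal.ofReal ε ^ finrank ℝ E ≠ ⊤ := by finiteness
  rw [Measure.addHaar_ball_of_pos μ 0 hε, ENNReal.ofReal_mul zero_le_two, ENNReal.ofReal_ofNat,
    ENNReal.ofReal_pow hε.le, ENNReal.mul_rpow_of_ne_top (by finiteness) (by finiteness),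
    ENNReal.rpow_add (x := ENNReal.ofReal ε) _ _ (by simpa) (by finiteness),
    ENNReal.rpow_natCast, mul_left_comm, ENNReal.mul_div_mul_left _ _ hε₀ hε_top,
    ENNReal.mul_div_right_comm]

lemma exists_lintegral_rpow_enorm_fderiv_le (hp : 1 ≤ p) (hα : 0 ≤ α) :
    ∃ C : ℝ≥0, ∀ (R : ℝ) (x₀ : E) (u : E → F), ContDiffOn ℝ 1 u (ball x₀ R) →
      ∀ ε, 0 < ε → ε ≤ R → ∫⁻ x in ball x₀ R, ‖fderiv ℝ u x‖ₑ ^ p ∂μ ≤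
        C * (ENNReal.ofReal ε ^ (α * p) * gagliardoEnergy μ α p (ball x₀ R) (fderiv ℝ u) +
          ∫⁻ x in ball x₀ R, (‖u x‖ₑ / ENNReal.ofReal ε) ^ p ∂μ) := by
  obtain ⟨C, hC⟩ := exists_lintegral_rpow_enorm_fderiv_le_div_addHaar_ball μ F hp hα
  set K : ℝ≥0∞ := 2 ^ (finrank ℝ E + α * p) / μ (ball 0 1) + 2 ^ finrank ℝ E
  have hK : K ≠ ⊤ := by
    have := (measure_ball_pos μ 0 one_pos).ne'
    have : 0 ≤ finrank ℝ E + α * p := by positivity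
    finiteness
  refine ⟨C * K.toNNReal, fun R x₀ u hu ε hε hεR ↦ (hC R x₀ u hu ε hε hεR).trans ?_⟩
  rw [ENNReal.add_div, ENNReal.mul_div_right_comm, mul_div_assoc,
    ofReal_two_mul_rpow_div_addHaar_ball μ hε, addHaar_ball_two_mul_div_addHaar_ball μ hε,
    ENNReal.coe_mul, ENNReal.coe_toNNReal hK, mul_assoc, mul_assoc, mul_add K,
    mul_comm (lintegral _ _)]
  gcongr
  · exact le_self_add
  · exact le_add_self

lemma exists_eLpNorm'_fderiv_le (hp : 1 ≤ p) (hα : 0 ≤ α) :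
    ∃ C : ℝ≥0, ∀ (R : ℝ) (x₀ : E) (u : E → F), ContDiffOn ℝ 1 u (ball x₀ R) →
      ∀ ε, 0 < ε → ε ≤ R → eLpNorm' (fderiv ℝ u) p (μ.restrict (ball x₀ R)) ≤
        C * (ENNReal.ofReal ε ^ α * gagliardoEnergy μ α p (ball x₀ R) (fderiv ℝ u) ^ (1 / p) +
          eLpNorm' u p (μ.restrict (ball x₀ R)) / ENNReal.ofReal ε) := by
  have hp₀ : 0 < p := by positivity
  have hp' : 0 ≤ 1 / p := by positivity
  obtain ⟨C, hC⟩ := exists_lintegral_rpow_enorm_fderiv_le μ F hp hα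
  refine ⟨C ^ (1 / p), fun R x₀ u hu ε hε hεR ↦ ?_⟩
  have h_div : ∫⁻ x in ball x₀ R, (‖u x‖ₑ / ENNReal.ofReal ε) ^ p ∂μ =
      (∫⁻ x in ball x₀ R, ‖u x‖ₑ ^ p ∂μ) / ENNReal.ofReal ε ^ p := by
    simp_rw [ENNReal.div_rpow_of_nonneg _ _ hp₀.le, div_eq_mul_inv]
    exact lintegral_mul_const' _ _ (by simp [hε])
  calc eLpNorm' (fderiv ℝ u) p (μ.restrict (ball x₀ R))
      ≤ (C * (ENNReal.ofReal ε ^ (α * p) * gagliardoEnergy μ α p (ball x₀ R) (fderiv ℝ u) +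
          (∫⁻ x in ball x₀ R, ‖u x‖ₑ ^ p ∂μ) / ENNReal.ofReal ε ^ p)) ^ (1 / p) := by
        rw [← h_div]
        exact ENNReal.rpow_le_rpow (hC R x₀ u hu ε hε hεR) hp'
    _ ≤ C ^ (1 / p) *
        ((ENNReal.ofReal ε ^ (α * p) * gagliardoEnergy μ α p (ball x₀ R) (fderiv ℝ u)) ^ (1 / p) +
          ((∫⁻ x in ball x₀ R, ‖u x‖ₑ ^ p ∂μ) / ENNReal.ofReal ε ^ p) ^ (1 / p)) := by
        rw [ENNReal.mul_rpow_of_nonneg _ _ hp']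
        gcongr
        exact ENNReal.rpow_add_le_add_rpow _ _ hp' ((div_le_one hp₀).2 hp)
    _ = _ := by
        rw [ENNReal.mul_rpow_of_nonneg _ _ hp', ENNReal.div_rpow_of_nonneg _ _ hp',
          ← ENNReal.rpow_mul, ← ENNReal.rpow_mul, mul_assoc, mul_one_div_cancel hp₀.ne', mul_one,
          ENNReal.rpow_one, ENNReal.coe_rpow_of_nonneg _ hp']
        rfl

theorem gagliardo_nirenberg_gradient_general (hp : 1 ≤ p) (hα : 0 ≤ α) :
    ∃ C : ℝ≥0, 0 < C ∧ ∀ (R : ℝ) (x₀ : E) (u : E → F), 0 < R → ContDiffOn ℝ 1 u (ball x₀ R) →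
      eLpNorm' (fderiv ℝ u) p (μ.restrict (ball x₀ R)) ≤
        C / ENNReal.ofReal R * eLpNorm' u p (μ.restrict (ball x₀ R)) +
          C * eLpNorm' u p (μ.restrict (ball x₀ R)) ^ (α / (1 + α)) *
            (gagliardoEnergy μ α p (ball x₀ R) (fderiv ℝ u) ^ (1 / p)) ^ (1 / (1 + α)) := by
  obtain ⟨C, hC⟩ := exists_eLpNorm'_fderiv_le μ F hp hα
  refine ⟨2 * C + 1, by positivity, fun R x₀ u hR hu ↦ ?_⟩
  rw [← ENNReal.mul_div_right_comm, mul_div_assoc, mul_assoc, ← mul_add]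
  refine (le_of_forall_le_rpow_mul_add_div hα (ENNReal.ofReal_pos.2 hR).ne' ENNReal.ofReal_ne_top
    (eLpNorm'_fderiv_eq_zero isOpen_ball (one_pos.trans_le hp) hu.continuousOn)
    fun ε hε hεR ↦ ?_).trans (mul_le_mul_left (by push_cast; exact le_self_add) _)
  have hε_top : ε ≠ ⊤ := ne_top_of_le_ne_top ENNReal.ofReal_ne_top hεR
  simpa only [ENNReal.ofReal_toReal hε_top] using
    hC R x₀ u hu ε.toReal (ENNReal.toReal_pos hε hε_top) (ENNReal.toReal_le_of_le_ofReal hR.le hεR)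

end GagliardoNirenberg

section Gradient

lemma lintegral_ofReal_norm_rpow_rpow_eq_eLpNorm' {X F : Type*} [MeasurableSpace X]
    [SeminormedAddCommGroup F] {ν : Measure X} (f : X → F) {p : ℝ} (hp : 0 ≤ p) :
    (∫⁻ x, ENNReal.ofReal (‖f x‖ ^ p) ∂ν) ^ (1 / p) = eLpNorm' f p ν := by
  simp_rw [eLpNorm', ← ENNReal.ofReal_rpow_of_nonneg (norm_nonneg _) hp, ofReal_norm]

variable {H : Type*} [NormedAddCommGroup H] [InnerProductSpace ℝ H] [CompleteSpace H] (u : H → ℝ)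

lemma eLpNorm'_gradient [MeasurableSpace H] (p : ℝ) (ν : Measure H) :
    eLpNorm' (gradient u) p ν = eLpNorm' (fderiv ℝ u) p ν := by
  simp_rw [eLpNorm', gradient, LinearIsometryEquiv.enorm_map]

lemma enorm_gradient_sub_gradient (x y : H) :
    ‖gradient u x - gradient u y‖ₑ = ‖fderiv ℝ u x - fderiv ℝ u y‖ₑ := by
  rw [gradient, gradient, ← map_sub, LinearIsometryEquiv.enorm_map]

lemma gagliardoGradE_eq_gagliardoEnergy_rpow {n : ℕ} {p : ℝ} (hp : 0 < p) (α : ℝ)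
    (D : Set (EuclideanSpace ℝ (Fin n))) (u : EuclideanSpace ℝ (Fin n) → ℝ) :
    gagliardoGradE n α p D u = gagliardoEnergy volume α p D (fderiv ℝ u) ^ (1 / p) := by
  rw [gagliardoGradE, gagliardoEnergy, finrank_euclideanSpace_fin]
  congr! with x y
  rw [← enorm_gradient_sub_gradient]
  rcases eq_or_ne x y with rfl | hxy
  · simp [hp, hp.ne']
  · have h_dist : 0 < dist x y := dist_pos.2 hxy
    rw [ENNReal.ofReal_div_of_pos (by positivity),
      ← ENNReal.ofReal_rpow_of_nonneg (norm_nonneg _) hp.le, ofReal_norm,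
      ← ENNReal.ofReal_rpow_of_pos h_dist, edist_dist]

end Gradient

theorem gagliardo_nirenberg_gradient (n : ℕ) (p α : ℝ) (hp : 1 < p) (hα₁ : 0 < α) (hα₂ : α < 1) :
    ∃ c : ℝ, 0 < c ∧
      ∀ (R : ℝ) (x₀ : EuclideanSpace ℝ (Fin n)) (u : EuclideanSpace ℝ (Fin n) → ℝ), 0 < R →
        (∃ V : Set (EuclideanSpace ℝ (Fin n)), IsOpen V ∧ closedBall x₀ R ⊆ V ∧
          ContDiffOn ℝ 1 u V) →
        (∫⁻ x in ball x₀ R, ENNReal.ofReal (‖gradient u x‖ ^ p)) ^ (1 / p) ≤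
          ENNReal.ofReal (c / R) *
              (∫⁻ x in ball x₀ R, ENNReal.ofReal (|u x| ^ p)) ^ (1 / p) +
            ENNReal.ofReal c *
              ((∫⁻ x in ball x₀ R, ENNReal.ofReal (|u x| ^ p)) ^ (1 / p)) ^ (α / (1 + α)) *
              gagliardoGradE n α p (ball x₀ R) u ^ (1 / (1 + α)) := by
  obtain ⟨C, hC₀, hC⟩ := gagliardo_nirenberg_gradient_general
    (volume : Measure (EuclideanSpace ℝ (Fin n))) ℝ hp.le hα₁.le
  refine ⟨C, hC₀, fun R x₀ u hR ⟨V, _, hV, hu⟩ ↦ ?_⟩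
  have hp₀ : 0 < p := one_pos.trans hp
  simpa only [← Real.norm_eq_abs, lintegral_ofReal_norm_rpow_rpow_eq_eLpNorm' _ hp₀.le,
    eLpNorm'_gradient, gagliardoGradE_eq_gagliardoEnergy_rpow hp₀, ENNReal.ofReal_div_of_pos hR,
    ENNReal.ofReal_coe_nnreal] using hC R x₀ u hR (hu.mono (ball_subset_closedBall.trans hV))
end
end
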